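/- Point spectrum of the harmonic oscillator: let k > 0 be real and n ∈ ℕ₀. Then the function f(v) := Heₙ(√(2k)·v)·e^{−k v²/2} on ℝ, where Heₙ is the n-th (probabilists') Hermite polynomial, is nonzero, square integrable on ℝ, and satisfies −f''(v) + k²v²·f(v) = k(2n+1)·f(v) for all v ∈ ℝ. Hence k(2n+1) is an eigenvalue of the harmonic oscillator N_k = −∂_v² + k²v² on L²(ℝ). -/

import Mathlib

open MeasureTheory Polynomial

lemma hermite_ode_aux (n : ℕ) :
    derivative (derivative (hermite n)) = X * derivative (hermite n) - (n : ℤ[X]) * hermite n := by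
  induction n with
  | zero => simp
  | succ n ih =>
    have h1 : derivative (hermite (n + 1)) = ((n : ℤ[X]) + 1) * hermite n := by
      rw [hermite_succ, derivative_sub, derivative_mul, derivative_X, ih]; ring
    rw [h1, derivative_mul, hermite_succ]
    simp only [derivative_add, derivative_natCast, derivative_one]
    push_cast
    ring

lemma poly_gauss_integrable_aux (b : ℝ) (hb : 0 < b) (q : ℝ[X]) :
    Integrable (fun v : ℝ => q.eval v * Real.exp (-b * v ^ 2)) := by
  induction q using Polynomial.induction_on' with
  | add p q hp hq =>
    simp only [eval_add, add_mul]
    exact hp.add hq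
  | monomial m a =>
    have h := integrable_rpow_mul_exp_neg_mul_sq hb (s := (m : ℝ))
      (by have : (0 : ℝ) ≤ m := Nat.cast_nonneg m
          linarith)
    simp only [Real.rpow_natCast] at h
    simp only [eval_monomial, mul_assoc]
    exact h.const_mul a

/-- point spectrum of the harmonic oscillator: for real `k > 0` and
`n ∈ ℕ₀`, the function `f(v) = Heₙ(√(2k) v) e^{-k v²/2}` (with `Heₙ` the n-th
probabilists' Hermite polynomial) is a nonzero square-integrable eigenfunction of
`N_k = -∂² + k²v²` with eigenvalue `k(2n+1)`. -/
theorem harmonic_oscillator_eigenfunction (k : ℝ) (hk : 0 < k) (n : ℕ)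
    (f : ℝ → ℝ)
    (hf : ∀ v : ℝ, f v =
      (Polynomial.aeval (Real.sqrt (2 * k) * v)) (Polynomial.hermite n) *
        Real.exp (-k * v ^ 2 / 2)) :
    f ≠ 0 ∧ Integrable (fun v : ℝ => f v ^ 2) ∧
    ∀ v : ℝ, -deriv (deriv f) v + k ^ 2 * v ^ 2 * f v = k * (2 * n + 1) * f v := by
  have hs : Real.sqrt (2 * k) ^ 2 = 2 * k := Real.sq_sqrt (by positivity)
  have hs0 : Real.sqrt (2 * k) ≠ 0 := by positivity
  generalize Real.sqrt (2 * k) = s at hf hs hs0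
  refine ⟨?_, ?_, ?_⟩
  · intro h0
    have hz : (hermite n).map (algebraMap ℤ ℝ) = 0 := by
      apply Polynomial.funext
      intro x
      have h1 := hf (x / s)
      rw [h0, mul_div_cancel₀ _ hs0] at h1
      have h2 := (mul_eq_zero.mp h1.symm).resolve_right (Real.exp_pos _).ne'
      rw [eval_map_algebraMap, h2, eval_zero]
    exact ((hermite_monic n).map (algebraMap ℤ ℝ)).ne_zero hz
  · have h := poly_gauss_integrable_aux k hk
      ((((hermite n).map (algebraMap ℤ ℝ)).comp (C s * X)) ^ 2)
    refine h.congr (Filter.Eventually.of_forall fun v => ?_)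
    simp only [hf v, eval_pow, eval_comp, eval_mul, eval_C, eval_X, eval_map_algebraMap, mul_pow,
      ← Real.exp_nat_mul]
    congr 2
    push_cast
    ring
  · have hE : ∀ v : ℝ, HasDerivAt (fun v : ℝ => Real.exp (-k * v ^ 2 / 2))
        (Real.exp (-k * v ^ 2 / 2) * (-k * v)) v := by
      intro v
      have h := (((hasDerivAt_pow 2 v).const_mul (-k)).div_const 2).exp
      convert h using 1
      simp
      ring
    have hP : ∀ (p : ℤ[X]) (v : ℝ), HasDerivAt (fun v : ℝ => aeval (s * v) p)
        (aeval (s * v) (derivative p) * s) v := by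
      intro p v
      have h := (p.hasDerivAt_aeval (s * v)).comp v ((hasDerivAt_id v).const_mul s)
      rw [mul_one] at h
      exact h
    have hf' : f = fun v => aeval (s * v) (hermite n) * Real.exp (-k * v ^ 2 / 2) := funext hf
    have hd1 : deriv f = fun v => (aeval (s * v) (derivative (hermite n)) * s)
        * Real.exp (-k * v ^ 2 / 2) + aeval (s * v) (hermite n) *
          (Real.exp (-k * v ^ 2 / 2) * (-k * v)) := by
      funext v
      rw [hf']
      exact ((hP _ v).mul (hE v)).deriv
    intro v
    have hd2 := ((((hP (derivative (hermite n)) v).mul_const s).mul (hE v)).add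
      ((hP (hermite n) v).mul ((hE v).mul ((hasDerivAt_id v).const_mul (-k))))).deriv
    have hd3 := (congrArg (fun g => deriv g v) hd1).trans hd2
    simp only [Pi.mul_apply] at hd3
    rw [hd3, hf v, hermite_ode_aux]
    simp only [map_sub, map_mul, aeval_X, map_natCast, id]
    generalize (aeval (s * v)) (hermite n) = A
    generalize (aeval (s * v)) (derivative (hermite n)) = B
    generalize Real.exp _ = E
    linear_combination (-(s * v * B - n * A) * E) * hs
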